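/- Let U : ℂ \ {0} → ℝ and let ψ = (ψ₁, ψ₂) satisfy the Dirac equation 𝒟ψ = 0 on ℂ \ {0} with potential U. For z′ ∈ ℂ define ψ̂₁(z′) = e^{z′/2}·ψ₁(e^{z′}), ψ̂₂(z′) = e^{conj(z′)/2}·ψ₂(e^{z′}), and Û(z′) = e^{Re z′}·U(e^{z′}). Then ψ̂ = (ψ̂₁, ψ̂₂) satisfies the Dirac equation in the variable z′ with potential Û: ∂_{z′} ψ̂₂ + Û ψ̂₁ = 0 and ∂̄_{z′} ψ̂₁ = Û ψ̂₂ on ℂ. -/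

import Mathlib

open Complex

/-- The Wirtinger derivative ∂f = (1/2)(∂f/∂x − i ∂f/∂y). -/
noncomputable def wd (f : ℂ → ℂ) (z : ℂ) : ℂ :=
  (1 / 2) * (fderiv ℝ f z 1 - Complex.I * fderiv ℝ f z Complex.I)

/-- The Wirtinger derivative ∂̄f = (1/2)(∂f/∂x + i ∂f/∂y). -/
noncomputable def wdbar (f : ℂ → ℂ) (z : ℂ) : ℂ :=
  (1 / 2) * (fderiv ℝ f z 1 + Complex.I * fderiv ℝ f z Complex.I)

/-- ψ = (ψ₁, ψ₂) satisfies the Dirac equation 𝒟ψ = 0 with potential U on Ω. -/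
def DiracEq (Ω : Set ℂ) (U : ℂ → ℝ) (ψ₁ ψ₂ : ℂ → ℂ) : Prop :=
  ∀ z ∈ Ω, wd ψ₂ z + (U z : ℂ) * ψ₁ z = 0 ∧ wdbar ψ₁ z = (U z : ℂ) * ψ₂ z

/-!
If `φ` is holomorphic and `s` is a holomorphic square root of `φ'`, then replacing `ψ₁`, `ψ₂` by
`s · ψ₁ ∘ φ`, `conj s · ψ₂ ∘ φ` multiplies the potential by `|s|² = |φ'|`: the antiholomorphic
factor `conj s` is a constant for `∂`, so `∂(conj s · ψ₂ ∘ φ) = conj s · s² · (∂ψ₂) ∘ φ`, and the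
surplus factor `s` is the one carried by `ψ₁`; the equation for `∂̄` is the conjugate computation.
Here `φ = exp` and `s = exp (· / 2)`.
-/

open scoped ComplexConjugate

section Wirtinger

variable {f g φ : ℂ → ℂ} {z : ℂ}

lemma fderiv_apply_eq_wd_add_wdbar (f : ℂ → ℂ) (z v : ℂ) :
    fderiv ℝ f z v = wd f z * v + wdbar f z * conj v := by
  have hre_im : fderiv ℝ f z v = v.re * fderiv ℝ f z 1 + v.im * fderiv ℝ f z I := by
    calc fderiv ℝ f z v = fderiv ℝ f z (v.re • (1 : ℂ) + v.im • I) := by simp [re_add_im]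
      _ = v.re * fderiv ℝ f z 1 + v.im * fderiv ℝ f z I := by
        rw [map_add, map_smul, map_smul, real_smul, real_smul]
  rw [hre_im, re_eq_add_conj, im_eq_sub_conj, wd, wdbar]
  field_simp
  linear_combination (v - conj v) * fderiv ℝ f z I * I_sq

lemma wd_conj (f : ℂ → ℂ) (z : ℂ) : wd (fun w ↦ conj (f w)) z = conj (wdbar f z) := by
  have hfderiv (v : ℂ) : fderiv ℝ (fun w ↦ conj (f w)) z v = conj (fderiv ℝ f z v) :=
    DFunLike.congr_fun (conjCLE.comp_fderiv (f := f) (x := z)) v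
  simp only [wd, wdbar, hfderiv, map_mul, map_add, map_div₀, map_one, map_ofNat, conj_I]
  ring

lemma wd_mul (hf : DifferentiableAt ℝ f z) (hg : DifferentiableAt ℝ g z) :
    wd (fun w ↦ f w * g w) z = f z * wd g z + g z * wd f z := by
  simp only [wd, fderiv_fun_mul hf hg, add_apply, smul_apply, smul_eq_mul]
  ring

lemma wd_comp (hf : DifferentiableAt ℝ f (φ z)) (hφ : DifferentiableAt ℝ φ z) :
    wd (fun w ↦ f (φ w)) z = wd f (φ z) * wd φ z + wdbar f (φ z) * conj (wdbar φ z) := by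
  have hchain (v : ℂ) : fderiv ℝ (fun w ↦ f (φ w)) z v
      = wd f (φ z) * fderiv ℝ φ z v + wdbar f (φ z) * conj (fderiv ℝ φ z v) := by
    rw [fderiv_fun_comp z hf hφ, ContinuousLinearMap.comp_apply, fderiv_apply_eq_wd_add_wdbar]
  rw [wd, hchain, hchain, wd.eq_def φ, wdbar.eq_def φ]
  simp only [map_mul, map_add, map_div₀, map_one, map_ofNat, conj_I]
  ring

lemma fderiv_real_apply_eq_mul_deriv (hf : DifferentiableAt ℂ f z) (v : ℂ) :
    fderiv ℝ f z v = v * deriv f z := by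
  rw [hf.fderiv_restrictScalars ℝ, ContinuousLinearMap.coe_restrictScalars', fderiv_eq_smul_deriv,
    smul_eq_mul]

lemma wd_eq_deriv (hf : DifferentiableAt ℂ f z) : wd f z = deriv f z := by
  rw [wd, fderiv_real_apply_eq_mul_deriv hf, fderiv_real_apply_eq_mul_deriv hf]
  linear_combination (-1 / 2) * deriv f z * I_sq

lemma wdbar_eq_zero_of_differentiableAt (hf : DifferentiableAt ℂ f z) : wdbar f z = 0 := by
  rw [wdbar, fderiv_real_apply_eq_mul_deriv hf, fderiv_real_apply_eq_mul_deriv hf]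
  linear_combination (1 / 2) * deriv f z * I_sq

end Wirtinger

section SpinorPullback

variable {f φ s : ℂ → ℂ} {z φ' : ℂ}

lemma wd_conj_mul_comp (hs : DifferentiableAt ℂ s z) (hφ : HasDerivAt φ φ' z)
    (hf : DifferentiableAt ℝ f (φ z)) :
    wd (fun w ↦ conj (s w) * f (φ w)) z = conj (s z) * φ' * wd f (φ z) := by
  have hφℝ : DifferentiableAt ℝ φ z := hφ.differentiableAt.restrictScalars ℝ
  have hsℝ : DifferentiableAt ℝ (fun w ↦ conj (s w)) z :=
    conjCLE.differentiableAt.comp z (hs.restrictScalars ℝ)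
  have hs_wd : wd (fun w ↦ conj (s w)) z = 0 := by
    rw [wd_conj, wdbar_eq_zero_of_differentiableAt hs, map_zero]
  have hcomp : wd (fun w ↦ f (φ w)) z = wd f (φ z) * φ' := by
    rw [wd_comp hf hφℝ, wd_eq_deriv hφ.differentiableAt, hφ.deriv,
      wdbar_eq_zero_of_differentiableAt hφ.differentiableAt, map_zero, mul_zero, add_zero]
  rw [wd_mul hsℝ (hf.fun_comp' z hφℝ), hs_wd, hcomp]
  ring

lemma wdbar_mul_comp (hs : DifferentiableAt ℂ s z) (hφ : HasDerivAt φ φ' z)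
    (hf : DifferentiableAt ℝ f (φ z)) :
    wdbar (fun w ↦ s w * f (φ w)) z = s z * conj φ' * wdbar f (φ z) := by
  have hf_conj : DifferentiableAt ℝ (fun w ↦ conj (f w)) (φ z) :=
    conjCLE.differentiableAt.comp (φ z) hf
  apply (starRingEnd ℂ).injective
  simpa only [← wd_conj, map_mul, conj_conj] using wd_conj_mul_comp hs hφ hf_conj

theorem DiracEq.pullback {Ω Ω' : Set ℂ} {U : ℂ → ℝ} {ψ₁ ψ₂ : ℂ → ℂ} (hψ : DiracEq Ω U ψ₁ ψ₂)
    (h₁ : ∀ w ∈ Ω, DifferentiableAt ℝ ψ₁ w) (h₂ : ∀ w ∈ Ω, DifferentiableAt ℝ ψ₂ w)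
    (hmaps : Set.MapsTo φ Ω' Ω) (hs : ∀ z ∈ Ω', DifferentiableAt ℂ s z)
    (hφ : ∀ z ∈ Ω', HasDerivAt φ (s z ^ 2) z) :
    DiracEq Ω' (fun z ↦ ‖s z‖ ^ 2 * U (φ z)) (fun z ↦ s z * ψ₁ (φ z))
      (fun z ↦ conj (s z) * ψ₂ (φ z)) := by
  intro z hz
  obtain ⟨hwd, hwdbar⟩ := hψ (φ z) (hmaps hz)
  have hpotential : ((‖s z‖ ^ 2 * U (φ z) : ℝ) : ℂ) = s z * conj (s z) * U (φ z) := by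
    rw [ofReal_mul, ofReal_pow, mul_conj']
  simp only [hpotential]
  constructor
  · rw [wd_conj_mul_comp (hs z hz) (hφ z hz) (h₂ _ (hmaps hz))]
    linear_combination conj (s z) * s z ^ 2 * hwd
  · rw [wdbar_mul_comp (hs z hz) (hφ z hz) (h₁ _ (hmaps hz)), hwdbar, map_pow]
    ring

end SpinorPullback

theorem stmt_8 (U : ℂ → ℝ) (ψ₁ ψ₂ : ℂ → ℂ)
    (h₁ : DifferentiableOn ℝ ψ₁ {z : ℂ | z ≠ 0})
    (h₂ : DifferentiableOn ℝ ψ₂ {z : ℂ | z ≠ 0})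
    (hψ : DiracEq {z : ℂ | z ≠ 0} U ψ₁ ψ₂) :
    DiracEq Set.univ
      (fun z' => Real.exp z'.re * U (Complex.exp z'))
      (fun z' => Complex.exp (z' / 2) * ψ₁ (Complex.exp z'))
      (fun z' => Complex.exp (starRingEnd ℂ z' / 2) * ψ₂ (Complex.exp z')) := by
  have hdiff {ψ : ℂ → ℂ} (h : DifferentiableOn ℝ ψ {z | z ≠ 0}) (w : ℂ) (hw : w ≠ 0) :
      DifferentiableAt ℝ ψ w :=
    h.differentiableAt (isOpen_ne.mem_nhds hw)
  have hsq (z : ℂ) : cexp (z / 2) ^ 2 = cexp z := by rw [← exp_nat_mul]; congr 1; ring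
  have hnorm (z : ℂ) : ‖cexp (z / 2)‖ ^ 2 = Real.exp z.re := by rw [← norm_pow, hsq, norm_exp]
  have hconj (z : ℂ) : conj (cexp (z / 2)) = cexp (conj z / 2) := by
    rw [← exp_conj, map_div₀, map_ofNat]
  have hpullback := hψ.pullback (Ω' := Set.univ) (φ := cexp) (s := fun z ↦ cexp (z / 2))
    (hdiff h₁) (hdiff h₂) (fun z _ ↦ exp_ne_zero z) (fun z _ ↦ by fun_prop)
    (fun z _ ↦ by simpa only [hsq] using hasDerivAt_exp z)
  simpa only [hnorm, hconj] using hpullback
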